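/- Let λ, μ ∈ ℝ, ν ∈ ℝ², κ, c_s, c_p > 0 and n ∈ ℕ. For x ≠ y in ℝ² define W^{n,1}(x,y) = (U_1(x,y)/|x−y|²)[ η̃_{1,n}(|x−y|) I + η̃_{2,n}(|x−y|) J(x−y) ] + η_{2,n}(|x−y|) U_2(x,y)/|x−y|². Let x : ℝ → ℝ² be twice continuously differentiable and let s ∈ ℝ with x'(s) ≠ 0. Then x(σ) ≠ x(s) for all σ ≠ s sufficiently close to s, and lim_{σ → s, σ ≠ s} W^{n,1}(x(s), x(σ)) = 0 (the zero 2×2 matrix). -/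

import Mathlib

open Real Filter MeasureTheory

noncomputable def acoef (γ : ℝ) : ℕ → ℕ → ℝ
  | n, m =>
    if m = 0 then 1
    else if n < m then 0
    else if m = n then -(γ / (n : ℝ)) * acoef γ (n - 1) (n - 1)
    else (1 / (2 * γ * (m : ℝ))) *
      (4 * (((m + 1) / 2 : ℕ) : ℝ) ^ 2 * acoef γ n (m + 1)
        - γ ^ 2 * ∑ k ∈ (Finset.Icc (m - 1) (n - 1)).attach,
            ((n - (k : ℕ) + 1 : ℕ) : ℝ) * acoef γ (k : ℕ) (m - 1))
  termination_by n m => (n, n - m)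
  decreasing_by
  · apply Prod.Lex.left; omega
  · apply Prod.Lex.right; omega
  · apply Prod.Lex.left
    have hk := k.2
    simp only [Finset.mem_Icc] at hk
    omega

/-- χ_{k,n} -/
noncomputable def chiC (n : ℕ) (k : ℤ) : ℝ :=
  if k = -2 then (n : ℝ) * ((n : ℝ) - 1)
  else if k = -1 then -4 * (n : ℝ) ^ 2
  else if k = 0 then 2 * (3 * (n : ℝ) ^ 2 + 3 * (n : ℝ) + 1)
  else if k = 1 then -4 * ((n : ℝ) + 1) ^ 2
  else if k = 2 then ((n : ℝ) + 1) * ((n : ℝ) + 2)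
  else 0

/-- the sum ∑_{k=-2}^{2} χ_{k,n} f(n+k), terms with n+k<0 omitted -/
noncomputable def sumChi (n : ℕ) (f : ℕ → ℝ) : ℝ :=
  ∑ k ∈ Finset.Icc (-2 : ℤ) 2,
    if 0 ≤ (n : ℤ) + k then chiC n k * f ((n : ℤ) + k).toNat else 0

noncomputable def besselI0 (z : ℝ) : ℝ := ∑' k : ℕ, (z / 2) ^ (2 * k) / (k.factorial : ℝ) ^ 2

noncomputable def besselI1 (z : ℝ) : ℝ :=
  ∑' k : ℕ, (z / 2) ^ (2 * k + 1) / ((k.factorial : ℝ) * ((k + 1).factorial : ℝ))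

noncomputable def psiH (k : ℕ) : ℝ := ∑ j ∈ Finset.range k, (1 : ℝ) / ((j : ℝ) + 1)

noncomputable def besselS0 (z : ℝ) : ℝ :=
  ∑' k : ℕ, psiH k * (z / 2) ^ (2 * k) / (k.factorial : ℝ) ^ 2

noncomputable def besselS1 (z : ℝ) : ℝ :=
  -(1 / 2) * ∑' k : ℕ, (psiH (k + 1) + psiH k) * (z / 2) ^ (2 * k + 1) /
    ((k.factorial : ℝ) * ((k + 1).factorial : ℝ))

noncomputable def vPol (γ : ℝ) (n : ℕ) (r : ℝ) : ℝ :=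
  ∑ m ∈ Finset.range (n / 2 + 1), acoef γ n (2 * m) * r ^ (2 * m)

noncomputable def wPol (γ : ℝ) (n : ℕ) (r : ℝ) : ℝ :=
  ∑ m ∈ Finset.range ((n - 1) / 2 + 1), acoef γ n (2 * m + 1) * r ^ (2 * m + 1)

noncomputable def vTil (γ : ℝ) (n : ℕ) (r : ℝ) : ℝ :=
  2 * ∑ m ∈ Finset.Icc 1 (n / 2), (m : ℝ) * acoef γ n (2 * m) * r ^ (2 * m)
    - γ * ∑ m ∈ Finset.range ((n - 1) / 2 + 1), acoef γ n (2 * m + 1) * r ^ (2 * m + 2)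

noncomputable def wTil (γ : ℝ) (n : ℕ) (r : ℝ) : ℝ :=
  2 * ∑ m ∈ Finset.Icc 1 ((n - 1) / 2), (m : ℝ) * acoef γ n (2 * m + 1) * r ^ (2 * m + 1)
    - γ * ∑ m ∈ Finset.range (n / 2 + 1), acoef γ n (2 * m) * r ^ (2 * m + 1)

noncomputable def phiF (γ : ℝ) (n : ℕ) (r : ℝ) : ℝ :=
  -besselI0 (γ * r) * vPol γ n r + besselI1 (γ * r) * wPol γ n r

noncomputable def phiHat (γ : ℝ) (n : ℕ) (r : ℝ) : ℝ :=
  (-(Real.eulerMascheroniConstant + Real.log (γ / 2)) * besselI0 (γ * r) + besselS0 (γ * r)) * vPol γ n r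
    + (1 / (γ * r) + (Real.eulerMascheroniConstant + Real.log (γ / 2)) * besselI1 (γ * r)
        + besselS1 (γ * r)) * wPol γ n r

noncomputable def phiTil (γ : ℝ) (n : ℕ) (r : ℝ) : ℝ :=
  -besselI0 (γ * r) * vTil γ n r + besselI1 (γ * r) * wTil γ n r

noncomputable def phiHatTil (γ : ℝ) (n : ℕ) (r : ℝ) : ℝ :=
  (-(Real.eulerMascheroniConstant + Real.log (γ / 2)) * besselI0 (γ * r) + besselS0 (γ * r)) * vTil γ n r
    + (1 / (γ * r) + (Real.eulerMascheroniConstant + Real.log (γ / 2)) * besselI1 (γ * r)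
        + besselS1 (γ * r)) * wTil γ n r

noncomputable def etaF (κ cs cp : ℝ) (ℓ n : ℕ) (r : ℝ) : ℝ :=
  (-(ℓ : ℝ)) ^ (ℓ - 1) / (κ ^ 2 * r ^ 2) *
      sumChi n (fun j => phiF (κ / cs) j r - phiF (κ / cp) j r)
    + (-1 : ℝ) ^ (ℓ - 1) / cp ^ 2 * phiF (κ / cp) n r
    + ((ℓ : ℝ) - 1) / cs ^ 2 * phiF (κ / cs) n r

noncomputable def xiF (κ cs cp : ℝ) (ℓ n : ℕ) (r : ℝ) : ℝ :=
  (-(ℓ : ℝ)) ^ (ℓ - 1) / (κ ^ 2 * r ^ 2) *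
      sumChi n (fun j => phiHat (κ / cs) j r - phiHat (κ / cp) j r)
    + (-1 : ℝ) ^ (ℓ - 1) / cp ^ 2 * phiHat (κ / cp) n r
    + ((ℓ : ℝ) - 1) / cs ^ 2 * phiHat (κ / cs) n r

noncomputable def etaTil (κ cs cp : ℝ) (ℓ n : ℕ) (r : ℝ) : ℝ :=
  (-(ℓ : ℝ)) ^ (ℓ - 1) / (κ ^ 2 * r ^ 2) *
      sumChi n (fun j => phiTil (κ / cs) j r - 2 * phiF (κ / cs) j r
        + 2 * phiF (κ / cp) j r - phiTil (κ / cp) j r)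
    + (-1 : ℝ) ^ (ℓ - 1) / cp ^ 2 * phiTil (κ / cp) n r
    + ((ℓ : ℝ) - 1) / cs ^ 2 * phiTil (κ / cs) n r

noncomputable def xiTil (κ cs cp : ℝ) (ℓ n : ℕ) (r : ℝ) : ℝ :=
  (-(ℓ : ℝ)) ^ (ℓ - 1) / (κ ^ 2 * r ^ 2) *
      sumChi n (fun j => phiHatTil (κ / cs) j r - 2 * phiHat (κ / cs) j r
        + 2 * phiHat (κ / cp) j r - phiHatTil (κ / cp) j r)
    + (-1 : ℝ) ^ (ℓ - 1) / cp ^ 2 * phiHatTil (κ / cp) n r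
    + ((ℓ : ℝ) - 1) / cs ^ 2 * phiHatTil (κ / cs) n r

/-- Euclidean norm on ℝ² (represented as `Fin 2 → ℝ`). -/
noncomputable def nrm2 (z : Fin 2 → ℝ) : ℝ := Real.sqrt (z 0 ^ 2 + z 1 ^ 2)

/-- Euclidean inner product on ℝ². -/
noncomputable def dot2 (a b : Fin 2 → ℝ) : ℝ := a 0 * b 0 + a 1 * b 1

/-- identity matrix entries -/
noncomputable def idm (i j : Fin 2) : ℝ := if i = j then 1 else 0

/-- J(z) = z zᵀ / |z|² -/
noncomputable def Jmat (z : Fin 2 → ℝ) (i j : Fin 2) : ℝ := z i * z j / nrm2 z ^ 2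

/-- U₁(x,y) = λ ν (x−y)ᵀ + μ (x−y) νᵀ + μ (ν·(x−y)) I -/
noncomputable def U1mat (lam mu : ℝ) (ν x y : Fin 2 → ℝ) (i j : Fin 2) : ℝ :=
  lam * ν i * (x j - y j) + mu * (x i - y i) * ν j + mu * dot2 ν (x - y) * idm i j

/-- U₂(x,y) = (λ+2μ) ν (x−y)ᵀ + μ (x−y) νᵀ + μ (ν·(x−y)) (I − 4J(x−y)) -/
noncomputable def U2mat (lam mu : ℝ) (ν x y : Fin 2 → ℝ) (i j : Fin 2) : ℝ :=
  (lam + 2 * mu) * ν i * (x j - y j) + mu * (x i - y i) * ν j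
    + mu * dot2 ν (x - y) * (idm i j - 4 * Jmat (x - y) i j)


/-- W^{n,1}(x,y) = (U₁(x,y)/|x−y|²)[η̃_{1,n}(|x−y|) I + η̃_{2,n}(|x−y|) J(x−y)]
      + η_{2,n}(|x−y|) U₂(x,y)/|x−y|². -/
noncomputable def Wn1 (lam mu : ℝ) (ν : Fin 2 → ℝ) (κ cs cp : ℝ) (n : ℕ)
    (x y : Fin 2 → ℝ) (i j : Fin 2) : ℝ :=
  (∑ k : Fin 2, U1mat lam mu ν x y i k / nrm2 (x - y) ^ 2 *
      (etaTil κ cs cp 1 n (nrm2 (x - y)) * idm k j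
        + etaTil κ cs cp 2 n (nrm2 (x - y)) * Jmat (x - y) k j))
    + etaF κ cs cp 2 n (nrm2 (x - y)) * U2mat lam mu ν x y i j / nrm2 (x - y) ^ 2

open Asymptotics Topology

lemma acoef_zero (γ : ℝ) (n : ℕ) : acoef γ n 0 = 1 := by
  rw [acoef]; simp

lemma acoef_gt (γ : ℝ) (n m : ℕ) (h : n < m) : acoef γ n m = 0 := by
  rw [acoef]
  have : m ≠ 0 := by omega
  simp [this, h]

lemma sum_lin (n : ℕ) :
    ∑ k ∈ Finset.range n, ((n - k + 1 : ℕ) : ℝ) = (n : ℝ) * (n + 3) / 2 := by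
  induction n with
  | zero => simp
  | succ n ih =>
    rw [Finset.sum_range_succ']
    have : ∀ k, n + 1 - (k + 1) + 1 = n - k + 1 := by intro k; omega
    simp only [this, ih]
    push_cast
    ring

lemma acoef_rel (γ : ℝ) (hγ : γ ≠ 0) (n : ℕ) :
    γ ^ 2 / 4 + acoef γ n 2 - γ * acoef γ n 1 / 2
      = γ ^ 2 / 8 * ((n + 1) * (n + 2)) := by
  rcases n with _ | _ | n
  · rw [acoef_gt _ _ _ (by norm_num), acoef_gt _ _ _ (by norm_num)]
    push_cast; ring
  · have h1 : acoef γ (0 + 1) 1 = -γ := by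
      rw [acoef]; simp [acoef_zero]
    rw [acoef_gt _ _ _ (by norm_num), h1]
    push_cast
    ring
  · have h1 : acoef γ (n + 1 + 1) 1 = (1 / (2 * γ)) *
        (4 * acoef γ (n + 1 + 1) 2 - γ ^ 2 * ((n + 2 : ℝ) * (n + 5) / 2)) := by
      rw [acoef]
      have e : ∑ k ∈ (Finset.Icc (1 - 1) (n + 1 + 1 - 1)).attach,
            ((n + 1 + 1 - (k : ℕ) + 1 : ℕ) : ℝ) * acoef γ (k : ℕ) (1 - 1)
          = (n + 2 : ℝ) * (n + 5) / 2 := by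
        rw [Finset.sum_attach (Finset.Icc (1 - 1) (n + 1 + 1 - 1))
          (fun k => ((n + 1 + 1 - k + 1 : ℕ) : ℝ) * acoef γ k (1 - 1))]
        have : Finset.Icc (1 - 1) (n + 1 + 1 - 1) = Finset.range (n + 1 + 1) := by
          ext k; simp
        rw [this]
        simp only [Nat.sub_self, acoef_zero, mul_one]
        rw [sum_lin]; push_cast; ring
      rw [e]
      simp
    rw [h1]
    push_cast
    field_simp
    ring

lemma geom_bound (t : ℕ → ℝ) (B : ℝ) (h : ∀ k, |t k| ≤ B * (1 / 2) ^ k) :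
    Summable t ∧ |∑' k, t k| ≤ B * 2 := by
  have hs : HasSum (fun k : ℕ => B * (1 / 2 : ℝ) ^ k) (B * 2) :=
    hasSum_geometric_two.mul_left B
  exact ⟨Summable.of_norm_bounded hs.summable h, by
    simpa [Real.norm_eq_abs] using tsum_of_norm_bounded (f := t) hs h⟩

lemma pow_bound (z : ℝ) (hz : |z| ≤ 1) (p k : ℕ) (d : ℝ) (hd : 1 ≤ d) :
    |(z / 2) ^ (p + 2 * k) / d| ≤ |z| ^ p * (1 / 2) ^ k := by
  rw [abs_div, abs_pow, abs_div, abs_two, abs_of_pos (by linarith : 0 < d), pow_add]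
  have h0 := abs_nonneg z
  have h1 : (|z| / 2) ^ p ≤ |z| ^ p := pow_le_pow_left₀ (by positivity) (by linarith) p
  have h2 : (|z| / 2) ^ (2 * k) ≤ (1 / 2) ^ k := by
    calc (|z| / 2) ^ (2 * k) ≤ (1 / 2) ^ (2 * k) :=
          pow_le_pow_left₀ (by positivity) (by linarith) _
      _ ≤ (1 / 2) ^ k := pow_le_pow_of_le_one (by norm_num) (by norm_num) (by omega)
  calc (|z| / 2) ^ p * (|z| / 2) ^ (2 * k) / d ≤ (|z| / 2) ^ p * (|z| / 2) ^ (2 * k) :=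
        div_le_self (by positivity) hd
    _ ≤ _ := by gcongr

lemma fact_one_le (k : ℕ) : (1 : ℝ) ≤ k.factorial := by
  exact_mod_cast Nat.factorial_pos k

lemma I0_exp : (fun z : ℝ => besselI0 z - (1 + z ^ 2 / 4)) =O[𝓝 0] fun z => z ^ 4 := by
  refine IsBigO.of_bound 2 ?_
  filter_upwards [Metric.closedBall_mem_nhds (0 : ℝ) one_pos] with z hz
  have hz : |z| ≤ 1 := by simpa using hz
  have hd : ∀ k : ℕ, (1 : ℝ) ≤ (k.factorial : ℝ) ^ 2 := fun k => one_le_pow₀ (fact_one_le k)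
  have hs : Summable fun k : ℕ => (z / 2) ^ (2 * k) / (k.factorial : ℝ) ^ 2 := by
    refine (geom_bound _ 1 fun k => ?_).1
    have := pow_bound z hz 0 k _ (hd k)
    simpa using this
  have h2 := (geom_bound (fun k : ℕ => (z / 2) ^ (2 * (k + 2)) / ((k + 2).factorial : ℝ) ^ 2)
    (|z| ^ 4) fun k => by
      have := pow_bound z hz 4 k _ (hd (k + 2))
      rwa [show 4 + 2 * k = 2 * (k + 2) by ring] at this).2
  have h3 := hs.sum_add_tsum_nat_add 2
  have : besselI0 z - (1 + z ^ 2 / 4) =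
      ∑' k : ℕ, (z / 2) ^ (2 * (k + 2)) / ((k + 2).factorial : ℝ) ^ 2 := by
    unfold besselI0
    rw [← h3]
    simp [Finset.sum_range_succ]
    ring
  rw [this, Real.norm_eq_abs, Real.norm_eq_abs, abs_pow]
  linarith

lemma I1_exp : (fun z : ℝ => besselI1 z - z / 2) =O[𝓝 0] fun z => z ^ 3 := by
  refine IsBigO.of_bound 2 ?_
  filter_upwards [Metric.closedBall_mem_nhds (0 : ℝ) one_pos] with z hz
  have hz : |z| ≤ 1 := by simpa using hz
  have hd : ∀ k : ℕ, (1 : ℝ) ≤ (k.factorial : ℝ) * ((k + 1).factorial : ℝ) := fun k =>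
    one_le_mul_of_one_le_of_one_le (fact_one_le k) (fact_one_le _)
  have hs : Summable fun k : ℕ =>
      (z / 2) ^ (2 * k + 1) / ((k.factorial : ℝ) * ((k + 1).factorial : ℝ)) := by
    refine (geom_bound _ (|z| ^ 1) fun k => ?_).1
    have := pow_bound z hz 1 k _ (hd k)
    rwa [add_comm 1 (2 * k)] at this
  have h2 := (geom_bound (fun k : ℕ =>
      (z / 2) ^ (2 * (k + 1) + 1) / (((k + 1).factorial : ℝ) * ((k + 1 + 1).factorial : ℝ)))
    (|z| ^ 3) fun k => by
      have := pow_bound z hz 3 k _ (hd (k + 1))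
      rwa [show 3 + 2 * k = 2 * (k + 1) + 1 by ring] at this).2
  have h3 := hs.sum_add_tsum_nat_add 1
  have : besselI1 z - z / 2 =
      ∑' k : ℕ, (z / 2) ^ (2 * (k + 1) + 1) /
        (((k + 1).factorial : ℝ) * ((k + 1 + 1).factorial : ℝ)) := by
    unfold besselI1
    rw [← h3]
    simp
  rw [this, Real.norm_eq_abs, Real.norm_eq_abs, abs_pow]
  linarith

lemma tendsto_mul_zero (γ : ℝ) : Tendsto (fun r : ℝ => γ * r) (𝓝 0) (𝓝 0) := by
  have : Continuous fun r : ℝ => γ * r := by fun_prop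
  simpa using this.tendsto 0

lemma I0_exp' (γ : ℝ) : (fun r : ℝ => besselI0 (γ * r) - (1 + γ ^ 2 * r ^ 2 / 4))
    =O[𝓝 0] fun r => r ^ 4 := by
  have h := I0_exp.comp_tendsto (tendsto_mul_zero γ)
  have h2 : ((fun z : ℝ => z ^ 4) ∘ fun r => γ * r) =O[𝓝 0] fun r : ℝ => r ^ 4 := by
    have := (isBigO_refl (fun r : ℝ => r ^ 4) (𝓝 0)).const_mul_left (γ ^ 4)
    refine this.congr_left fun r => by simp [mul_pow]
  refine (h.trans h2).congr_left fun r => by simp [mul_pow]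

lemma I1_exp' (γ : ℝ) : (fun r : ℝ => besselI1 (γ * r) - γ * r / 2)
    =O[𝓝 0] fun r => r ^ 3 := by
  have h := I1_exp.comp_tendsto (tendsto_mul_zero γ)
  have h2 : ((fun z : ℝ => z ^ 3) ∘ fun r => γ * r) =O[𝓝 0] fun r : ℝ => r ^ 3 := by
    have := (isBigO_refl (fun r : ℝ => r ^ 3) (𝓝 0)).const_mul_left (γ ^ 3)
    refine this.congr_left fun r => by simp [mul_pow]
  exact h.trans h2

lemma pow_bigO (p q : ℕ) (h : q ≤ p) : (fun r : ℝ => r ^ p) =O[𝓝 0] fun r : ℝ => r ^ q := by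
  have : (fun r : ℝ => r ^ p) = fun r => r ^ q * r ^ (p - q) := by
    ext r; rw [← pow_add]; congr 1; omega
  rw [this]
  have h1 : (fun r : ℝ => r ^ (p - q)) =O[𝓝 0] fun _ => (1 : ℝ) :=
    ((continuous_pow (p - q)).tendsto (0 : ℝ)).isBigO_one ℝ
  simpa using (isBigO_refl (fun r : ℝ => r ^ q) (𝓝 0)).mul h1

lemma tail_bigO (N q : ℕ) (c : ℕ → ℝ) (e : ℕ → ℕ) (he : ∀ m, q ≤ e m) :
    (fun r : ℝ => ∑ m ∈ Finset.range N, c m * r ^ e m) =O[𝓝 0] fun r : ℝ => r ^ q :=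
  IsBigO.fun_sum fun m _ => (pow_bigO _ _ (he m)).const_mul_left _

lemma cont_bigO (f : ℝ → ℝ) (hf : Continuous f) : f =O[𝓝 0] fun r : ℝ => r ^ 0 := by
  simpa using (hf.tendsto 0).isBigO_one ℝ

lemma mul_bigO {f g : ℝ → ℝ} {a b : ℕ} (c : ℕ) (h : a + b = c)
    (hf : f =O[𝓝 0] fun r : ℝ => r ^ a) (hg : g =O[𝓝 0] fun r : ℝ => r ^ b) :
    (fun r => f r * g r) =O[𝓝 0] fun r : ℝ => r ^ c := by
  subst h
  refine (hf.mul hg).congr_right fun r => by rw [pow_add]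

/-- General product expansion. -/
lemma prod_exp (γ α a2 b : ℝ) (v w : ℝ → ℝ)
    (hv : (fun r => v r - (α + a2 * r ^ 2)) =O[𝓝 0] fun r : ℝ => r ^ 4)
    (hw : (fun r => w r - b * r) =O[𝓝 0] fun r : ℝ => r ^ 3) :
    (fun r => (-besselI0 (γ * r) * v r + besselI1 (γ * r) * w r)
      - (-α + -(α * γ ^ 2 / 4 + a2 - γ * b / 2) * r ^ 2)) =O[𝓝 0] fun r : ℝ => r ^ 4 := by
  have hv0 : v =O[𝓝 0] fun r : ℝ => r ^ 0 := by
    have := (hv.trans (pow_bigO 4 0 (by norm_num))).add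
      (cont_bigO (fun r => α + a2 * r ^ 2) (by fun_prop))
    exact this.congr_left fun r => by ring
  have hb : ∀ c : ℝ, (fun r : ℝ => c * r) =O[𝓝 0] fun r : ℝ => r ^ 1 := fun c => by
    simpa using (isBigO_refl (fun r : ℝ => r) (𝓝 0)).const_mul_left c
  have hw0 : w =O[𝓝 0] fun r : ℝ => r ^ 1 := by
    have := (hw.trans (pow_bigO 3 1 (by norm_num))).add (hb b)
    exact this.congr_left fun r => by ring
  have t1 := mul_bigO 4 rfl (I0_exp' γ) hv0
  have t2 := mul_bigO 4 rfl (cont_bigO (fun r => 1 + γ ^ 2 * r ^ 2 / 4) (by fun_prop)) hv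
  have t3 := mul_bigO 4 rfl (I1_exp' γ) hw0
  have t4 := mul_bigO 4 rfl (hb (γ / 2)) hw
  have t5 := (isBigO_refl (fun r : ℝ => r ^ 4) (𝓝 0)).const_mul_left (-(γ ^ 2 / 4 * a2))
  refine ((((t3.add t4).sub t1).sub t2).add t5).congr_left fun r => ?_
  ring

lemma vPol_exp (γ : ℝ) (n : ℕ) :
    (fun r => vPol γ n r - (1 + acoef γ n 2 * r ^ 2)) =O[𝓝 0] fun r : ℝ => r ^ 4 := by
  have h := tail_bigO (n / 2) 4 (fun m => acoef γ n (2 * (m + 2))) (fun m => 2 * (m + 2))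
    (fun m => by omega)
  refine h.congr_left fun r => ?_
  have e : vPol γ n r = ∑ m ∈ Finset.range (n / 2 + 2), acoef γ n (2 * m) * r ^ (2 * m) := by
    rw [Finset.sum_range_succ, acoef_gt γ n (2 * (n / 2 + 1)) (by omega)]
    simp [vPol]
  rw [e, Finset.sum_range_succ', Finset.sum_range_succ']
  simp [acoef_zero]
  ring

lemma wPol_exp (γ : ℝ) (n : ℕ) :
    (fun r => wPol γ n r - acoef γ n 1 * r) =O[𝓝 0] fun r : ℝ => r ^ 3 := by
  have h := tail_bigO ((n - 1) / 2) 3 (fun m => acoef γ n (2 * (m + 1) + 1))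
    (fun m => 2 * (m + 1) + 1) (fun m => by omega)
  refine h.congr_left fun r => ?_
  unfold wPol
  rw [Finset.sum_range_succ']
  simp

lemma Icc_sum (N : ℕ) (f : ℕ → ℝ) :
    ∑ m ∈ Finset.Icc 1 N, f m = ∑ m ∈ Finset.range N, f (m + 1) := by
  rw [Finset.range_eq_Ico, Finset.sum_Ico_add' f 0 N 1]
  rfl

lemma vTil_exp (γ : ℝ) (n : ℕ) :
    (fun r => vTil γ n r - (0 + (2 * acoef γ n 2 - γ * acoef γ n 1) * r ^ 2))
      =O[𝓝 0] fun r : ℝ => r ^ 4 := by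
  have h := tail_bigO (n / 2) 4 (fun m => ((m + 2 : ℕ) : ℝ) * acoef γ n (2 * (m + 2)))
    (fun m => 2 * (m + 2)) (fun m => by omega)
  have h' := tail_bigO ((n - 1) / 2) 4 (fun m => acoef γ n (2 * (m + 1) + 1))
    (fun m => 2 * (m + 1) + 2) (fun m => by omega)
  refine ((h.const_mul_left 2).sub (h'.const_mul_left γ)).congr_left fun r => ?_
  have e : ∑ m ∈ Finset.Icc 1 (n / 2), (m : ℝ) * acoef γ n (2 * m) * r ^ (2 * m)
      = ∑ m ∈ Finset.Icc 1 (n / 2 + 1), (m : ℝ) * acoef γ n (2 * m) * r ^ (2 * m) := by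
    rw [Finset.sum_Icc_succ_top (by omega), acoef_gt γ n (2 * (n / 2 + 1)) (by omega)]
    simp
  unfold vTil
  rw [e, Icc_sum, Finset.sum_range_succ', Finset.sum_range_succ' _ ((n - 1) / 2)]
  simp only [add_assoc, Nat.reduceAdd]
  norm_num
  ring

lemma wTil_exp (γ : ℝ) (n : ℕ) :
    (fun r => wTil γ n r - (-γ) * r) =O[𝓝 0] fun r : ℝ => r ^ 3 := by
  have h := tail_bigO ((n - 1) / 2) 3 (fun m => ((m + 1 : ℕ) : ℝ) * acoef γ n (2 * (m + 1) + 1))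
    (fun m => 2 * (m + 1) + 1) (fun m => by omega)
  have h' := tail_bigO (n / 2) 3 (fun m => acoef γ n (2 * (m + 1)))
    (fun m => 2 * (m + 1) + 1) (fun m => by omega)
  refine ((h.const_mul_left 2).sub (h'.const_mul_left γ)).congr_left fun r => ?_
  unfold wTil
  rw [Icc_sum, Finset.sum_range_succ']
  simp [acoef_zero]
  ring

lemma phiF_exp (γ : ℝ) (hγ : γ ≠ 0) (n : ℕ) :
    (fun r => phiF γ n r - (-1 + -(γ ^ 2 / 8 * ((n + 1) * (n + 2))) * r ^ 2))
      =O[𝓝 0] fun r : ℝ => r ^ 4 := by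
  refine (prod_exp γ _ _ _ _ _ (vPol_exp γ n) (wPol_exp γ n)).congr_left fun r => ?_
  rw [← acoef_rel γ hγ n]
  unfold phiF
  ring

lemma phiTil_exp (γ : ℝ) (hγ : γ ≠ 0) (n : ℕ) :
    (fun r => phiTil γ n r - 2 * (-(γ ^ 2 / 8 * ((n + 1) * (n + 2))) * r ^ 2))
      =O[𝓝 0] fun r : ℝ => r ^ 4 := by
  refine (prod_exp γ _ _ _ _ _ (vTil_exp γ n) (wTil_exp γ n)).congr_left fun r => ?_
  rw [← acoef_rel γ hγ n]
  unfold phiTil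
  ring

lemma sumChi_bigO (n : ℕ) (f : ℕ → ℝ → ℝ)
    (hf : ∀ j, f j =O[𝓝 0] fun r : ℝ => r ^ 4) :
    (fun r => sumChi n (fun j => f j r)) =O[𝓝 0] fun r : ℝ => r ^ 4 := by
  unfold sumChi
  refine IsBigO.fun_sum fun k _ => ?_
  split_ifs
  · exact (hf _).const_mul_left _
  · exact isBigO_zero _ _

lemma sumChi_add (n : ℕ) (f g : ℕ → ℝ) :
    sumChi n (fun j => f j + g j) = sumChi n f + sumChi n g := by
  unfold sumChi
  rw [← Finset.sum_add_distrib]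
  refine Finset.sum_congr rfl fun k _ => ?_
  split_ifs <;> ring

lemma sumChi_quad (n : ℕ) (q : ℝ) :
    sumChi n (fun j => q * ((j + 1) * (j + 2))) = 4 * q := by
  have hI : Finset.Icc (-2 : ℤ) 2 = {-2, -1, 0, 1, 2} := by decide
  unfold sumChi
  rw [hI]
  rcases n with _ | _ | n
  · simp [chiC]; norm_num; ring
  · simp [chiC]; norm_num; ring
  · have h1 : ((n + 1 + 1 : ℕ) : ℤ) + -2 = (n : ℕ) := by push_cast; ring
    have h2 : ((n + 1 + 1 : ℕ) : ℤ) + -1 = (n + 1 : ℕ) := by push_cast; ring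
    have h3 : ((n + 1 + 1 : ℕ) : ℤ) + 0 = (n + 2 : ℕ) := by push_cast; ring
    have h4 : ((n + 1 + 1 : ℕ) : ℤ) + 1 = (n + 3 : ℕ) := by push_cast; ring
    have h5 : ((n + 1 + 1 : ℕ) : ℤ) + 2 = (n + 4 : ℕ) := by push_cast; ring
    rw [Finset.sum_insert (by decide), Finset.sum_insert (by decide),
      Finset.sum_insert (by decide), Finset.sum_insert (by decide), Finset.sum_singleton]
    rw [h1, h2, h3, h4, h5]
    simp only [Int.natCast_nonneg, if_true, Int.toNat_natCast, chiC]
    norm_num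
    ring

lemma div_bigO (c κ : ℝ) (hκ : κ ≠ 0) (f : ℝ → ℝ) (hf : f =O[𝓝 0] fun r : ℝ => r ^ 4) :
    (fun r => c / (κ ^ 2 * r ^ 2) * f r) =O[𝓝[≠] 0] fun r : ℝ => r ^ 2 := by
  have h1 := ((isBigO_refl (fun r : ℝ => (r ^ 2)⁻¹) (𝓝[≠] 0)).const_mul_left (c / κ ^ 2)).mul
    (hf.mono nhdsWithin_le_nhds)
  refine h1.congr' (Eventually.of_forall fun r => ?_) ?_
  · simp only [div_eq_mul_inv, mul_inv]; ring
  · filter_upwards [self_mem_nhdsWithin] with r hr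
    have : r ≠ 0 := hr
    field_simp

lemma etaTil_bigO (κ cs cp : ℝ) (hκ : 0 < κ) (hcs : 0 < cs) (hcp : 0 < cp) (ℓ n : ℕ) :
    (fun r => etaTil κ cs cp ℓ n r) =O[𝓝[≠] 0] fun r : ℝ => r ^ 2 := by
  have hs : κ / cs ≠ 0 := by positivity
  have hp : κ / cp ≠ 0 := by positivity
  have hT : ∀ γ : ℝ, γ ≠ 0 → (fun r => phiTil γ n r) =O[𝓝[≠] 0] fun r : ℝ => r ^ 2 := by
    intro γ hγ
    have h := ((phiTil_exp γ hγ n).trans (pow_bigO 4 2 (by norm_num))).add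
      ((isBigO_refl (fun r : ℝ => r ^ 2) (𝓝 0)).const_mul_left
        (2 * (-(γ ^ 2 / 8 * ((n + 1) * (n + 2))))))
    exact (h.congr_left fun r => by ring).mono nhdsWithin_le_nhds
  have hsum := sumChi_bigO n (fun j r => phiTil (κ / cs) j r - 2 * phiF (κ / cs) j r
        + 2 * phiF (κ / cp) j r - phiTil (κ / cp) j r) (fun j => by
    refine ((((phiTil_exp _ hs j).sub ((phiF_exp _ hs j).const_mul_left 2)).add
      ((phiF_exp _ hp j).const_mul_left 2)).sub (phiTil_exp _ hp j)).congr_left fun r => ?_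
    ring)
  unfold etaTil
  exact ((div_bigO _ κ hκ.ne' _ hsum).add ((hT _ hp).const_mul_left _)).add
    ((hT _ hs).const_mul_left _)

lemma etaF_bigO (κ cs cp : ℝ) (hκ : 0 < κ) (hcs : 0 < cs) (hcp : 0 < cp) (n : ℕ) :
    (fun r => etaF κ cs cp 2 n r) =O[𝓝[≠] 0] fun r : ℝ => r ^ 2 := by
  have hs : κ / cs ≠ 0 := by positivity
  have hp : κ / cp ≠ 0 := by positivity
  have hT : ∀ γ : ℝ, γ ≠ 0 → (fun r => phiF γ n r + 1) =O[𝓝[≠] 0] fun r : ℝ => r ^ 2 := by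
    intro γ hγ
    have h := ((phiF_exp γ hγ n).trans (pow_bigO 4 2 (by norm_num))).add
      ((isBigO_refl (fun r : ℝ => r ^ 2) (𝓝 0)).const_mul_left
        ((-(γ ^ 2 / 8 * ((n + 1) * (n + 2))))))
    exact (h.congr_left fun r => by ring).mono nhdsWithin_le_nhds
  set Q : ℝ := (κ / cp) ^ 2 / 8 - (κ / cs) ^ 2 / 8 with hQ
  have hsum := sumChi_bigO n (fun j r => phiF (κ / cs) j r - phiF (κ / cp) j r
      + (-(Q * r ^ 2)) * ((j + 1) * (j + 2))) (fun j => by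
    refine ((phiF_exp _ hs j).sub (phiF_exp _ hp j)).congr_left fun r => ?_
    rw [hQ]; ring)
  simp only [sumChi_add, sumChi_quad] at hsum
  have h := ((div_bigO (-2) κ hκ.ne' _ hsum).add ((hT _ hp).const_mul_left (-1 / cp ^ 2))).add
    ((hT _ hs).const_mul_left (1 / cs ^ 2))
  refine h.congr' ?_ EventuallyEq.rfl
  filter_upwards [self_mem_nhdsWithin] with r hr
  have hr : r ≠ 0 := hr
  unfold etaF
  have e : -2 / (κ ^ 2 * r ^ 2) * (4 * -(Q * r ^ 2)) = 1 / cp ^ 2 - 1 / cs ^ 2 := by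
    rw [hQ]; field_simp; ring
  rw [mul_add, e]
  norm_num
  ring

lemma nrm2_coord (z : Fin 2 → ℝ) (i : Fin 2) : |z i| ≤ nrm2 z := by
  unfold nrm2
  apply Real.abs_le_sqrt
  fin_cases i <;> simp <;> positivity

lemma nrm2_pos (z : Fin 2 → ℝ) (hz : z ≠ 0) : nrm2 z ≠ 0 := by
  intro h
  apply hz
  ext i
  have := nrm2_coord z i
  rw [h] at this
  simpa using this

/-- Along a smooth curve, W^{n,1}(x(s), x(σ)) tends to the zero matrix as σ → s. -/
theorem Wn1_diagonal_limit (lam mu : ℝ) (ν : Fin 2 → ℝ) (κ cs cp : ℝ)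
    (hκ : 0 < κ) (hcs : 0 < cs) (hcp : 0 < cp) (n : ℕ)
    (x : ℝ → (Fin 2 → ℝ)) (hx : ContDiff ℝ 2 x) (s : ℝ) (hx' : deriv x s ≠ 0) :
    (∃ δ > (0 : ℝ), ∀ σ : ℝ, σ ≠ s → |σ - s| < δ → x σ ≠ x s) ∧
    Tendsto (fun σ : ℝ => fun i j : Fin 2 => Wn1 lam mu ν κ cs cp n (x s) (x σ) i j)
      (nhdsWithin s {s}ᶜ)
      (nhds (fun _ _ : Fin 2 => (0 : ℝ))) := by
  have hd : HasDerivAt x (deriv x s) s :=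
    ((hx.differentiable (by norm_num)) s).hasDerivAt
  have hne : ∀ᶠ σ in 𝓝[≠] s, x σ ≠ x s := hd.eventually_ne hx'
  refine ⟨?_, ?_⟩
  · rw [eventually_nhdsWithin_iff, Metric.eventually_nhds_iff] at hne
    obtain ⟨δ, hδ, h⟩ := hne
    exact ⟨δ, hδ, fun σ hσ hd => h (by simpa [Real.dist_eq] using hd) hσ⟩
  · set l := 𝓝[≠] s with hl
    set r : ℝ → ℝ := fun σ => nrm2 (x s - x σ) with hr
    have hcont : Continuous r := by
      have := hx.continuous
      unfold r nrm2
      simp only [Pi.sub_apply]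
      fun_prop
    have hr0 : Tendsto r l (𝓝 0) := by
      have := (hcont.tendsto s).mono_left (nhdsWithin_le_nhds (s := {s}ᶜ))
      simpa [hr, nrm2] using this
    have hrne : ∀ᶠ σ in l, r σ ≠ 0 := by
      filter_upwards [hne] with σ h
      exact nrm2_pos _ (sub_ne_zero.2 h.symm)
    have hrw : Tendsto r l (𝓝[≠] 0) := tendsto_nhdsWithin_iff.2 ⟨hr0, hrne⟩
    have hT : ∀ ℓ, (fun σ => etaTil κ cs cp ℓ n (r σ)) =O[l] fun σ => r σ ^ 2 := fun ℓ =>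
      (etaTil_bigO κ cs cp hκ hcs hcp ℓ n).comp_tendsto hrw
    have hE : (fun σ => etaF κ cs cp 2 n (r σ)) =O[l] fun σ => r σ ^ 2 :=
      (etaF_bigO κ cs cp hκ hcs hcp n).comp_tendsto hrw
    have hz : ∀ i, (fun σ => x s i - x σ i) =O[l] r := fun i => by
      refine IsBigO.of_bound 1 (Eventually.of_forall fun σ => ?_)
      rw [one_mul]
      exact (nrm2_coord (x s - x σ) i).trans (le_abs_self _)
    have hJ : ∀ i j, (fun σ => Jmat (x s - x σ) i j) =O[l] fun _ => (1 : ℝ) := fun i j => by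
      have h := ((hz i).mul (hz j)).mul (isBigO_refl (fun σ => (r σ ^ 2)⁻¹) l)
      refine h.trans_eventuallyEq ?_ 
      filter_upwards [hrne] with σ h
      field_simp
    have hdot : (fun σ => dot2 ν (x s - x σ)) =O[l] r := by
      unfold dot2
      exact ((hz 0).const_mul_left _).add ((hz 1).const_mul_left _)
    have hU1 : ∀ i j, (fun σ => U1mat lam mu ν (x s) (x σ) i j) =O[l] r := fun i j => by
      refine ((((hz j).const_mul_left (lam * ν i)).add
        ((hz i).const_mul_left (mu * ν j))).add
        (hdot.const_mul_left (mu * idm i j))).congr_left fun σ => ?_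
      unfold U1mat; ring
    have hU2 : ∀ i j, (fun σ => U2mat lam mu ν (x s) (x σ) i j) =O[l] r := fun i j => by
      have hb : (fun σ => idm i j - 4 * Jmat (x s - x σ) i j) =O[l] fun _ => (1 : ℝ) :=
        (isBigO_const_const _ one_ne_zero _).sub ((hJ i j).const_mul_left 4)
      have hb2 : (fun σ => dot2 ν (x s - x σ) * (idm i j - 4 * Jmat (x s - x σ) i j)) =O[l] r := by
        simpa using hdot.mul hb
      refine ((((hz j).const_mul_left ((lam + 2 * mu) * ν i)).add
        ((hz i).const_mul_left (mu * ν j))).add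
        (hb2.const_mul_left mu)).congr_left fun σ => ?_
      unfold U2mat; ring
    have key : ∀ u e : ℝ → ℝ, u =O[l] r → (e =O[l] fun σ => r σ ^ 2) →
        (fun σ => u σ / r σ ^ 2 * e σ) =O[l] r := fun u e hu he => by
      have h := (hu.mul (isBigO_refl (fun σ => (r σ ^ 2)⁻¹) l)).mul he
      refine h.congr' (Eventually.of_forall fun σ => ?_) ?_
      · simp only [div_eq_mul_inv]
      · filter_upwards [hrne] with σ h
        field_simp
    rw [tendsto_pi_nhds]
    intro i
    rw [tendsto_pi_nhds]
    intro j
    have hW : (fun σ => Wn1 lam mu ν κ cs cp n (x s) (x σ) i j) =O[l] r := by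
      unfold Wn1
      refine IsBigO.add (IsBigO.fun_sum fun k _ => ?_) ?_
      · refine key _ _ (hU1 i k) (IsBigO.add ?_ ?_)
        · simpa using (hT 1).mul (isBigO_const_const (idm k j) (one_ne_zero (α := ℝ)) l)
        · simpa using (hT 2).mul (hJ k j)
      · refine (key _ _ (hU2 i j) hE).congr_left fun σ => ?_
        simp only [hr]
        ring
    exact hW.trans_tendsto hr0
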